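/- Let φ : Prop and A : Type u. The unit map η at the type Cl_φ A, i.e., the map Cl_φ A → Cl_φ (Cl_φ A) given by the quotient map composed with Sum.inl, is bijective (the closed modality is idempotent). -/

import Mathlib

/-!
When `φ` holds, `Cl φ A` is a single point (`cl_eq_inr`). Hence the unit at `Cl φ A` has a
well-defined left inverse, the multiplication `clJoin`. The unit is also surjective: a point of
`Cl φ (Cl φ A)` coming from the summand `φ` provides a proof of `φ`, so `Cl φ (Cl φ A)` is a
single point, and that point is the image of the point of `Cl φ A` given by the same proof.
-/

/-- The relation generating the pushout defining the closed modality: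
`Sum.inl a` is related to `Sum.inr ⟨h⟩` for every `a : A` and `h : φ`. -/
def ClRel (φ : Prop) (A : Type u) : A ⊕ PLift φ → A ⊕ PLift φ → Prop :=
  fun x y => ∃ (a : A) (h : φ), x = Sum.inl a ∧ y = Sum.inr ⟨h⟩

/-- The closed modality `Cl φ A`, the pushout `A ⊔_{A × φ} φ`. -/
def Cl (φ : Prop) (A : Type u) : Type u := Quot (ClRel φ A)

/-- The unit `η : A → Cl φ A`. -/
def clUnit (φ : Prop) (A : Type u) : A → Cl φ A := fun a => Quot.mk _ (Sum.inl a)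

/-- If `φ` holds, `Cl φ A` is contracted onto the point coming from `φ`. -/
theorem cl_eq_inr {φ : Prop} {A : Type u} (h : φ) (x : Cl φ A) :
    x = Quot.mk _ (Sum.inr ⟨h⟩) := by
  rcases x with ⟨a | _⟩
  · exact Quot.sound ⟨a, h, rfl, rfl⟩
  · rfl

/-- The multiplication of the closed modality: the identity on the summand `Cl φ A`, and the
inclusion of `φ` on the other summand. -/
def clJoin (φ : Prop) (A : Type u) : Cl φ (Cl φ A) → Cl φ A :=
  Quot.lift (Sum.elim id fun p => Quot.mk _ (Sum.inr p)) (by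
    rintro _ _ ⟨x, h, rfl, rfl⟩
    exact cl_eq_inr h x)

/-- the closed modality is idempotent: the unit at `Cl φ A` is bijective. -/
theorem cl_idempotent (φ : Prop) (A : Type u) :
    Function.Bijective (clUnit φ (Cl φ A)) := by
  refine ⟨Function.LeftInverse.injective (g := clJoin φ A) fun _ => rfl, ?_⟩
  rintro ⟨x | ⟨⟨h⟩⟩⟩
  · exact ⟨x, rfl⟩
  · exact ⟨Quot.mk _ (Sum.inr ⟨h⟩), cl_eq_inr h _⟩
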